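/- arXiv:2408.08783 — 4 statements merged into one kernel-verified Lean document; each statement's English description precedes it below -/
import Mathlib

section
/- Let A₁, B, C, D be real matrices of sizes n₁×n₁, n₁×n₂, n₂×n₁, n₂×n₂, let I denote the n₂×n₂ identity, and suppose the block matrix A = fromBlocks A₁ B C D is invertible. If ε ≥ 0 satisfies ‖B‖ ≤ ε, ‖D − I‖ ≤ ε, and ε·‖A⁻¹‖ ≤ 1/2 (all norms being L∞ operator norms), then A₁ is invertible and ‖A₁⁻¹‖ ≤ 2‖A⁻¹‖. -/
open Matrix

attribute [local instance] Matrix.linftyOpNormedAddCommGroup Matrix.linftyOpNormedRing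

theorem aux_norm_le_iff {m k : Type*} [Fintype m] [Fintype k] (X : Matrix m k ℝ) (r : ℝ)
    (hr : 0 ≤ r) : ‖X‖ ≤ r ↔ ∀ i, ∑ j, ‖X i j‖ ≤ r := by
  lift r to NNReal using hr
  rw [← coe_nnnorm, NNReal.coe_le_coe, Matrix.linfty_opNNNorm_def, Finset.sup_le_iff]
  simp [← NNReal.coe_le_coe]

theorem aux_row_le {m k : Type*} [Fintype m] [Fintype k] (X : Matrix m k ℝ) (i : m) :
    ∑ j, ‖X i j‖ ≤ ‖X‖ := (aux_norm_le_iff X _ (norm_nonneg _)).1 le_rfl i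

theorem aux_fromRows_le {m n k : Type*} [Fintype m] [Fintype n] [Fintype k]
    (X : Matrix m k ℝ) (Y : Matrix n k ℝ) (r : ℝ) (hr : 0 ≤ r) :
    ‖fromRows X Y‖ ≤ r ↔ ‖X‖ ≤ r ∧ ‖Y‖ ≤ r := by
  simp only [aux_norm_le_iff _ r hr, Sum.forall, fromRows_apply_inl, fromRows_apply_inr]

theorem aux_main {k : Type*} [Fintype k]
    (n₁ n₂ : ℕ)
    (A₁ : Matrix (Fin n₁) (Fin n₁) ℝ) (B : Matrix (Fin n₁) (Fin n₂) ℝ)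
    (C : Matrix (Fin n₂) (Fin n₁) ℝ) (D : Matrix (Fin n₂) (Fin n₂) ℝ)
    (hA : IsUnit (Matrix.fromBlocks A₁ B C D))
    (ε : ℝ) (hε : 0 ≤ ε) (hB : ‖B‖ ≤ ε) (hD : ‖D - 1‖ ≤ ε)
    (hsmall : ε * ‖(Matrix.fromBlocks A₁ B C D)⁻¹‖ ≤ 1 / 2) (X : Matrix (Fin n₁) k ℝ) :
    ‖X‖ ≤ 2 * ‖(Matrix.fromBlocks A₁ B C D)⁻¹‖ * ‖A₁ * X‖ := by
  set M := (Matrix.fromBlocks A₁ B C D)⁻¹ with hM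
  obtain ⟨Y, hY⟩ : ∃ Y, Y = -(C * X) := ⟨_, rfl⟩
  set V := fromRows X Y with hV
  obtain ⟨hX, hYV⟩ := (aux_fromRows_le X Y ‖V‖ (norm_nonneg _)).1 le_rfl
  have hAV : Matrix.fromBlocks A₁ B C D * V
      = fromRows (A₁ * X) 0 + fromRows (B * Y) ((D - 1) * Y) := by
    rw [hV, fromBlocks_mul_fromRows]
    have : C * X = -Y := by rw [hY, neg_neg]
    ext (i | i) j
    · simp
    · simp [this, Matrix.sub_mul]
      ring
  have hVe : V = M * (fromRows (A₁ * X) (0 : Matrix (Fin n₂) k ℝ) : Matrix (Fin n₁ ⊕ Fin n₂) k ℝ)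
      + M * (fromRows (B * Y) ((D - 1) * Y) : Matrix (Fin n₁ ⊕ Fin n₂) k ℝ) := by
    rw [← Matrix.mul_add, ← hAV, ← Matrix.mul_assoc, hM,
      Matrix.nonsing_inv_mul _ ((Matrix.isUnit_iff_isUnit_det _).1 hA), Matrix.one_mul]
  have h1 : ‖fromRows (A₁ * X) (0 : Matrix (Fin n₂) k ℝ)‖ ≤ ‖A₁ * X‖ :=
    (aux_fromRows_le _ _ _ (norm_nonneg _)).2 ⟨le_rfl, by simp⟩
  have h2 : ‖fromRows (B * Y) ((D - 1) * Y)‖ ≤ ε * ‖V‖ := by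
    refine (aux_fromRows_le _ _ _ (by positivity)).2 ⟨?_, ?_⟩
    · exact (linfty_opNorm_mul _ _).trans (by gcongr)
    · exact (linfty_opNorm_mul _ _).trans (by gcongr)
  have h3 : ‖V‖ ≤ ‖M‖ * ‖A₁ * X‖ + ‖M‖ * (ε * ‖V‖) := by
    calc ‖V‖ = _ := congrArg norm hVe
      _ ≤ _ := norm_add_le _ _
      _ ≤ _ := by
        gcongr
        · exact (linfty_opNorm_mul _ _).trans (by gcongr)
        · exact (linfty_opNorm_mul _ _).trans (by gcongr)
  have h4 := mul_le_mul_of_nonneg_right hsmall (norm_nonneg V)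
  linarith

/-- Let `A₁, B, C, D` be real matrices of sizes `n₁ × n₁`, `n₁ × n₂`, `n₂ × n₁`, `n₂ × n₂`, and
suppose the block matrix `A = fromBlocks A₁ B C D` is invertible. If `ε ≥ 0` satisfies
`‖B‖ ≤ ε`, `‖D - 1‖ ≤ ε` and `ε * ‖A⁻¹‖ ≤ 1/2` (L∞ operator norms), then `A₁` is invertible
and `‖A₁⁻¹‖ ≤ 2 * ‖A⁻¹‖`. -/
theorem compressed_block_isUnit_and_inv_norm_le
    (n₁ n₂ : ℕ)
    (A₁ : Matrix (Fin n₁) (Fin n₁) ℝ) (B : Matrix (Fin n₁) (Fin n₂) ℝ)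
    (C : Matrix (Fin n₂) (Fin n₁) ℝ) (D : Matrix (Fin n₂) (Fin n₂) ℝ)
    (hA : IsUnit (Matrix.fromBlocks A₁ B C D))
    (ε : ℝ) (hε : 0 ≤ ε) (hB : ‖B‖ ≤ ε) (hD : ‖D - 1‖ ≤ ε)
    (hsmall : ε * ‖(Matrix.fromBlocks A₁ B C D)⁻¹‖ ≤ 1 / 2) :
    IsUnit A₁ ∧ ‖A₁⁻¹‖ ≤ 2 * ‖(Matrix.fromBlocks A₁ B C D)⁻¹‖ := by
  have hu : IsUnit A₁ := by
    rw [Matrix.isUnit_iff_isUnit_det, isUnit_iff_ne_zero]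
    intro h0
    obtain ⟨v, hv, hv0⟩ := Matrix.exists_mulVec_eq_zero_iff.2 h0
    have h := aux_main n₁ n₂ A₁ B C D hA ε hε hB hD hsmall (replicateCol Unit v)
    rw [← replicateCol_mulVec, hv0, linfty_opNorm_replicateCol, linfty_opNorm_replicateCol,
      norm_zero, mul_zero] at h
    exact hv (norm_le_zero_iff.1 h)
  refine ⟨hu, ?_⟩
  have h := aux_main n₁ n₂ A₁ B C D hA ε hε hB hD hsmall A₁⁻¹
  rw [Matrix.mul_nonsing_inv _ ((Matrix.isUnit_iff_isUnit_det _).1 hu)] at h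
  have h1 : ‖(1 : Matrix (Fin n₁) (Fin n₁) ℝ)‖ ≤ 1 := by
    refine (aux_norm_le_iff _ _ zero_le_one).2 fun i => ?_
    simp [Matrix.one_apply, apply_ite]
  exact h.trans (mul_le_of_le_one_right (by positivity) h1)
end

section
/- Let A₁, B, C, D be real matrices of sizes n₁×n₁, n₁×n₂, n₂×n₁, n₂×n₂, let I denote the n₂×n₂ identity, and suppose the block matrix A = fromBlocks A₁ B C D is invertible. Let K ≥ 1 and δ ≥ 0 satisfy ‖B‖ ≤ K·δ, ‖D − I‖ ≤ K·δ, ‖C‖ ≤ K, and 2K·(2K·‖A⁻¹‖ + 1)·δ ≤ 1 (all norms being L∞ operator norms). Then A₁ is invertible and ‖A⁻¹‖ ≤ 2K·‖A₁⁻¹‖ + 2. -/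
open Matrix

attribute [local instance] Matrix.linftyOpNormedAddCommGroup Matrix.linftyOpNormedRing

theorem row_le_aux {m n : Type*} [Fintype m] [Fintype n] (P : Matrix m n ℝ) (i : m) :
    ∑ j, ‖P i j‖ ≤ ‖P‖ := by
  rw [Matrix.linfty_opNorm_def]
  have := Finset.le_sup (f := fun i => ∑ j, ‖P i j‖₊) (Finset.mem_univ i)
  have h2 : ((∑ j, ‖P i j‖₊ : NNReal) : ℝ) ≤ _ := NNReal.coe_le_coe.2 this
  simpa using h2

theorem norm_le_aux {m n : Type*} [Fintype m] [Fintype n] (P : Matrix m n ℝ) (r : ℝ) (hr : 0 ≤ r)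
    (h : ∀ i, ∑ j, ‖P i j‖ ≤ r) : ‖P‖ ≤ r := by
  rw [Matrix.linfty_opNorm_def]
  lift r to NNReal using hr
  refine NNReal.coe_le_coe.2 (Finset.sup_le fun i _ => ?_)
  have := h i
  rw [← NNReal.coe_le_coe]
  simpa using this

theorem blocks_norm_aux {m n : ℕ}
    (P : Matrix (Fin m) (Fin m) ℝ) (Q : Matrix (Fin m) (Fin n) ℝ)
    (R : Matrix (Fin n) (Fin m) ℝ) (S : Matrix (Fin n) (Fin n) ℝ) (r : ℝ)
    (h1 : ‖P‖ + ‖Q‖ ≤ r) (h2 : ‖R‖ + ‖S‖ ≤ r) : ‖Matrix.fromBlocks P Q R S‖ ≤ r := by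
  refine norm_le_aux _ _ (by linarith [norm_nonneg P, norm_nonneg Q]) ?_
  rintro (i | i)
  · rw [Fintype.sum_sum_type]
    simp only [Matrix.fromBlocks_apply₁₁, Matrix.fromBlocks_apply₁₂]
    linarith [row_le_aux P i, row_le_aux Q i]
  · rw [Fintype.sum_sum_type]
    simp only [Matrix.fromBlocks_apply₂₁, Matrix.fromBlocks_apply₂₂]
    linarith [row_le_aux R i, row_le_aux S i]

theorem one_norm_aux (n : ℕ) : ‖(1 : Matrix (Fin n) (Fin n) ℝ)‖ ≤ 1 := by
  refine norm_le_aux _ _ zero_le_one fun i => ?_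
  rw [Finset.sum_eq_single i] <;> simp +contextual [Matrix.one_apply, eq_comm]

/-- Let `A₁, B, C, D` be real matrices of sizes `n₁ × n₁`, `n₁ × n₂`, `n₂ × n₁`, `n₂ × n₂`, and
suppose the block matrix `A = fromBlocks A₁ B C D` is invertible. Let `K ≥ 1` and `δ ≥ 0`
satisfy `‖B‖ ≤ K * δ`, `‖D - 1‖ ≤ K * δ`, `‖C‖ ≤ K` and `2K(2K‖A⁻¹‖ + 1)δ ≤ 1` (L∞ operator
norms). Then `A₁` is invertible and `‖A⁻¹‖ ≤ 2K‖A₁⁻¹‖ + 2`. -/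
theorem full_inv_norm_le_compressed_inv_norm
    (n₁ n₂ : ℕ)
    (A₁ : Matrix (Fin n₁) (Fin n₁) ℝ) (B : Matrix (Fin n₁) (Fin n₂) ℝ)
    (C : Matrix (Fin n₂) (Fin n₁) ℝ) (D : Matrix (Fin n₂) (Fin n₂) ℝ)
    (hA : IsUnit (Matrix.fromBlocks A₁ B C D))
    (K δ : ℝ) (hK : 1 ≤ K) (hδ : 0 ≤ δ)
    (hB : ‖B‖ ≤ K * δ) (hD : ‖D - 1‖ ≤ K * δ) (hC : ‖C‖ ≤ K)
    (hsmall : 2 * K * (2 * K * ‖(Matrix.fromBlocks A₁ B C D)⁻¹‖ + 1) * δ ≤ 1) :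
    IsUnit A₁ ∧ ‖(Matrix.fromBlocks A₁ B C D)⁻¹‖ ≤ 2 * K * ‖A₁⁻¹‖ + 2 := by
  set A := Matrix.fromBlocks A₁ B C D with hAdef
  set E := Matrix.fromBlocks (0 : Matrix (Fin n₁) (Fin n₁) ℝ) B 0 (D - 1) with hE
  have hEn : ‖E‖ ≤ K * δ := blocks_norm_aux _ _ _ _ _ (by simpa using hB) (by simpa using hD)
  have hAE : A - E = Matrix.fromBlocks A₁ 0 C 1 := by
    rw [hAdef, hE, sub_eq_add_neg, Matrix.fromBlocks_neg, Matrix.fromBlocks_add]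
    simp
  have ha := norm_nonneg A⁻¹
  have hdet : IsUnit A.det := (Matrix.isUnit_iff_isUnit_det _).1 hA
  have hKδ : 0 ≤ K * δ := by positivity
  have hsm : ‖A⁻¹‖ * (K * δ) ≤ 1 / 4 := by
    have h0 : 0 ≤ ‖A⁻¹‖ * (K * δ) := by positivity
    nlinarith [mul_nonneg h0 (sub_nonneg.2 hK)]
  have hAEn : ‖A⁻¹ * E‖ ≤ 1 / 4 :=
    (Matrix.linfty_opNorm_mul _ _).trans
      ((mul_le_mul_of_nonneg_left hEn ha).trans hsm)
  letI := Matrix.linftyOpNormedSpace (m := Fin n₁ ⊕ Fin n₂) (n := Fin n₁ ⊕ Fin n₂) (R := ℝ) (α := ℝ)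
  haveI : CompleteSpace (Matrix (Fin n₁ ⊕ Fin n₂) (Fin n₁ ⊕ Fin n₂) ℝ) :=
    FiniteDimensional.complete ℝ _
  have hu : IsUnit (1 - A⁻¹ * E) := isUnit_one_sub_of_norm_lt_one (by linarith)
  have hu' : IsUnit (A - E) := by
    have : A - E = A * (1 - A⁻¹ * E) := by
      rw [mul_sub, mul_one, Matrix.mul_nonsing_inv_cancel_left _ _ hdet]
    rw [this]
    exact hA.mul hu
  have hA1 : IsUnit A₁ := by
    rw [hAE, Matrix.isUnit_fromBlocks_zero₁₂] at hu'
    exact hu'.1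
  refine ⟨hA1, ?_⟩
  have hinv : (A - E)⁻¹ = Matrix.fromBlocks A₁⁻¹ 0 (-(C * A₁⁻¹)) 1 := by
    rw [hAE, Matrix.inv_fromBlocks_zero₁₂_of_isUnit_iff _ _ _ (by simp [hA1])]
    simp
  have hb := norm_nonneg A₁⁻¹
  have hinvn : ‖(A - E)⁻¹‖ ≤ K * ‖A₁⁻¹‖ + 1 := by
    rw [hinv]
    refine blocks_norm_aux _ _ _ _ _ ?_ ?_
    · rw [norm_zero]
      nlinarith
    · rw [norm_neg]
      have := (Matrix.linfty_opNorm_mul C A₁⁻¹).trans (mul_le_mul_of_nonneg_right hC hb)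
      linarith [one_norm_aux n₂]
  have hid : A⁻¹ = (A - E)⁻¹ - A⁻¹ * E * (A - E)⁻¹ := by
    have hd' : IsUnit (A - E).det := (Matrix.isUnit_iff_isUnit_det _).1 hu'
    calc A⁻¹ = A⁻¹ * ((A - E) * (A - E)⁻¹) := by rw [Matrix.mul_nonsing_inv _ hd', mul_one]
      _ = (A⁻¹ * A) * (A - E)⁻¹ - A⁻¹ * E * (A - E)⁻¹ := by noncomm_ring
      _ = _ := by rw [Matrix.nonsing_inv_mul _ hdet, one_mul]
  have h3 : ‖A⁻¹‖ ≤ ‖(A - E)⁻¹‖ + ‖A⁻¹ * E‖ * ‖(A - E)⁻¹‖ := by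
    calc ‖A⁻¹‖ = ‖(A - E)⁻¹ - A⁻¹ * E * (A - E)⁻¹‖ := by rw [← hid]
      _ ≤ _ := (norm_sub_le _ _).trans
        (add_le_add le_rfl (Matrix.linfty_opNorm_mul _ _))
  have h4 := mul_le_mul_of_nonneg_right hAEn (norm_nonneg (A - E)⁻¹)
  have h5 : 0 ≤ K * ‖A₁⁻¹‖ := by positivity
  linarith
end

section
/- Let A₁, B, C, D be real matrices of sizes n₁×n₁, n₁×n₂, n₂×n₁, n₂×n₂, let I denote the n₂×n₂ identity, and suppose both A = fromBlocks A₁ B C D and A₁ are invertible. Let b₁ ∈ ℝ^{n₁}, d ∈ ℝ^{n₂}, and set α = A⁻¹·(Sum.elim b₁ d), α₁ = A₁⁻¹·b₁, and ᾱ = Sum.elim α₁ (d − C·α₁). Then, with matrix norms the L∞ operator norm and vector norms the sup norm, ‖α − ᾱ‖ ≤ ‖A⁻¹‖ · max(‖B‖, ‖D − I‖) · (‖d‖ + ‖C‖·‖α₁‖). -/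
open Matrix

attribute [local instance] Matrix.linftyOpNormedAddCommGroup Matrix.linftyOpNormedRing

/-- Let `A₁, B, C, D` be real matrices of sizes `n₁ × n₁`, `n₁ × n₂`, `n₂ × n₁`, `n₂ × n₂`, with
both `A = fromBlocks A₁ B C D` and `A₁` invertible. Let `b₁ ∈ ℝ^{n₁}`, `d ∈ ℝ^{n₂}`, and set
`α = A⁻¹ *ᵥ (Sum.elim b₁ d)`, `α₁ = A₁⁻¹ *ᵥ b₁`, `ᾱ = Sum.elim α₁ (d - C *ᵥ α₁)`. Then, with
matrix norms the L∞ operator norm and vector norms the sup norm,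
`‖α - ᾱ‖ ≤ ‖A⁻¹‖ * max ‖B‖ ‖D - 1‖ * (‖d‖ + ‖C‖ * ‖α₁‖)`. -/
theorem coefficient_error_bound
    (n₁ n₂ : ℕ)
    (A₁ : Matrix (Fin n₁) (Fin n₁) ℝ) (B : Matrix (Fin n₁) (Fin n₂) ℝ)
    (C : Matrix (Fin n₂) (Fin n₁) ℝ) (D : Matrix (Fin n₂) (Fin n₂) ℝ)
    (hA : IsUnit (Matrix.fromBlocks A₁ B C D)) (hA₁ : IsUnit A₁)
    (b₁ : Fin n₁ → ℝ) (d : Fin n₂ → ℝ) :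
    ‖(Matrix.fromBlocks A₁ B C D)⁻¹ *ᵥ (Sum.elim b₁ d) -
        Sum.elim (A₁⁻¹ *ᵥ b₁) (d - C *ᵥ (A₁⁻¹ *ᵥ b₁))‖ ≤
      ‖(Matrix.fromBlocks A₁ B C D)⁻¹‖ * max ‖B‖ ‖D - 1‖ *
        (‖d‖ + ‖C‖ * ‖A₁⁻¹ *ᵥ b₁‖) := by
  have hx : A₁ *ᵥ (A₁⁻¹ *ᵥ b₁) = b₁ := by
    rw [Matrix.mulVec_mulVec, Matrix.mul_nonsing_inv _ ((Matrix.isUnit_iff_isUnit_det _).1 hA₁),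
      Matrix.one_mulVec]
  generalize A₁⁻¹ *ᵥ b₁ = x at hx ⊢
  have hy : ‖d - C *ᵥ x‖ ≤ ‖d‖ + ‖C‖ * ‖x‖ :=
    (norm_sub_le _ _).trans (by gcongr; exact Matrix.linfty_opNorm_mulVec C x)
  have hx2 : C *ᵥ x + (d - C *ᵥ x) = d := by abel
  generalize d - C *ᵥ x = y at hy hx2 ⊢
  have key : (Matrix.fromBlocks A₁ B C D)⁻¹ *ᵥ (Sum.elim b₁ d) - Sum.elim x y =
      (Matrix.fromBlocks A₁ B C D)⁻¹ *ᵥ (Sum.elim (-(B *ᵥ y)) (-((D - 1) *ᵥ y))) := by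
    have h1 : (Sum.elim x y : Fin n₁ ⊕ Fin n₂ → ℝ) = (Matrix.fromBlocks A₁ B C D)⁻¹ *ᵥ
        (Matrix.fromBlocks A₁ B C D *ᵥ Sum.elim x y) := by
      rw [Matrix.mulVec_mulVec,
        Matrix.nonsing_inv_mul _ ((Matrix.isUnit_iff_isUnit_det _).1 hA), Matrix.one_mulVec]
    conv_lhs => rw [h1]
    rw [← Matrix.mulVec_sub, Matrix.fromBlocks_mulVec]
    congr 1
    ext i
    rcases i with i | i
    · simp [hx]
    · simp [← hx2, Matrix.sub_mulVec]
  rw [key, mul_assoc]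
  refine (Matrix.linfty_opNorm_mulVec _ _).trans ?_
  refine mul_le_mul_of_nonneg_left ?_ (norm_nonneg _)
  refine le_trans ?_ (mul_le_mul_of_nonneg_left hy (le_max_of_le_left (norm_nonneg _)))
  have hm : 0 ≤ max ‖B‖ ‖D - 1‖ := le_max_of_le_left (norm_nonneg _)
  rw [pi_norm_le_iff_of_nonneg (mul_nonneg hm (norm_nonneg _))]
  rintro (i | i)
  · simp only [Sum.elim_inl, Pi.neg_apply, norm_neg]
    exact (norm_le_pi_norm _ i).trans ((Matrix.linfty_opNorm_mulVec _ _).trans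
      (mul_le_mul_of_nonneg_right (le_max_left _ _) (norm_nonneg _)))
  · simp only [Sum.elim_inr, Pi.neg_apply, norm_neg]
    exact (norm_le_pi_norm _ i).trans ((Matrix.linfty_opNorm_mulVec _ _).trans
      (mul_le_mul_of_nonneg_right (le_max_right _ _) (norm_nonneg _)))
end

section
/- Let A₁, B, C, D be real matrices of sizes n₁×n₁, n₁×n₂, n₂×n₁, n₂×n₂, let I denote the n₂×n₂ identity, and suppose A = fromBlocks A₁ B C D is invertible. Let K ≥ 1 and δ ≥ 0 satisfy ‖B‖ ≤ K·δ, ‖D − I‖ ≤ K·δ, ‖C‖ ≤ K, and 2K·(2K·‖A⁻¹‖ + 1)·δ ≤ 1 (L∞ operator norms). Then A₁ is invertible, and for all b₁ ∈ ℝ^{n₁}, d ∈ ℝ^{n₂}, setting α = A⁻¹·(Sum.elim b₁ d), α₁ = A₁⁻¹·b₁ and ᾱ = Sum.elim α₁ (d − C·α₁), one has (with sup norms on vectors) ‖α − ᾱ‖ ≤ K·δ·(2K·‖A₁⁻¹‖ + 2)·(‖d‖ + K·‖α₁‖). -/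
open Matrix

attribute [local instance] Matrix.linftyOpNormedAddCommGroup Matrix.linftyOpNormedRing

theorem aux_elim_norm_le {n₁ n₂ : ℕ} (u : Fin n₁ → ℝ) (v : Fin n₂ → ℝ) (r : ℝ) (hr : 0 ≤ r)
    (hu : ‖u‖ ≤ r) (hv : ‖v‖ ≤ r) : ‖(Sum.elim u v : Fin n₁ ⊕ Fin n₂ → ℝ)‖ ≤ r := by
  rw [pi_norm_le_iff_of_nonneg hr]
  rintro (i | i)
  · exact (norm_le_pi_norm u i).trans hu
  · exact (norm_le_pi_norm v i).trans hv

theorem aux_left_norm_le {n₁ n₂ : ℕ} (u : Fin n₁ → ℝ) (v : Fin n₂ → ℝ) :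
    ‖u‖ ≤ ‖(Sum.elim u v : Fin n₁ ⊕ Fin n₂ → ℝ)‖ := by
  rw [pi_norm_le_iff_of_nonneg (norm_nonneg _)]
  intro i
  exact norm_le_pi_norm (Sum.elim u v : Fin n₁ ⊕ Fin n₂ → ℝ) (Sum.inl i)

/-- Let `A₁, B, C, D` be real matrices of sizes `n₁ × n₁`, `n₁ × n₂`, `n₂ × n₁`, `n₂ × n₂`, and
suppose `A = fromBlocks A₁ B C D` is invertible. Let `K ≥ 1` and `δ ≥ 0` satisfy `‖B‖ ≤ K·δ`,
`‖D − 1‖ ≤ K·δ`, `‖C‖ ≤ K`, and `2K(2K‖A⁻¹‖ + 1)δ ≤ 1` (L∞ operator norms). Then `A₁` is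
invertible, and for all `b₁ ∈ ℝ^{n₁}`, `d ∈ ℝ^{n₂}`, setting `α = A⁻¹ *ᵥ (Sum.elim b₁ d)`,
`α₁ = A₁⁻¹ *ᵥ b₁` and `ᾱ = Sum.elim α₁ (d - C *ᵥ α₁)`, one has (sup norms on vectors)
`‖α − ᾱ‖ ≤ K·δ·(2K‖A₁⁻¹‖ + 2)·(‖d‖ + K‖α₁‖)`. -/
theorem a_posteriori_coefficient_error_bound
    (n₁ n₂ : ℕ)
    (A₁ : Matrix (Fin n₁) (Fin n₁) ℝ) (B : Matrix (Fin n₁) (Fin n₂) ℝ)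
    (C : Matrix (Fin n₂) (Fin n₁) ℝ) (D : Matrix (Fin n₂) (Fin n₂) ℝ)
    (hA : IsUnit (Matrix.fromBlocks A₁ B C D))
    (K δ : ℝ) (hK : 1 ≤ K) (hδ : 0 ≤ δ)
    (hB : ‖B‖ ≤ K * δ) (hD : ‖D - 1‖ ≤ K * δ) (hC : ‖C‖ ≤ K)
    (hsmall : 2 * K * (2 * K * ‖(Matrix.fromBlocks A₁ B C D)⁻¹‖ + 1) * δ ≤ 1) :
    IsUnit A₁ ∧
      ∀ (b₁ : Fin n₁ → ℝ) (d : Fin n₂ → ℝ),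
        ‖(Matrix.fromBlocks A₁ B C D)⁻¹ *ᵥ (Sum.elim b₁ d) -
            Sum.elim (A₁⁻¹ *ᵥ b₁) (d - C *ᵥ (A₁⁻¹ *ᵥ b₁))‖ ≤
          K * δ * (2 * K * ‖A₁⁻¹‖ + 2) * (‖d‖ + K * ‖A₁⁻¹ *ᵥ b₁‖) := by
  have hK0 : 0 ≤ K := by linarith
  have ht0 : 0 ≤ K * δ := by positivity
  set A := Matrix.fromBlocks A₁ B C D with hAdef
  have hdet : IsUnit A.det := (Matrix.isUnit_iff_isUnit_det A).1 hA
  obtain ⟨M, hM⟩ : ∃ M, M = ‖A⁻¹‖ := ⟨_, rfl⟩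
  have hM0 : 0 ≤ M := hM ▸ norm_nonneg _
  rw [← hM] at hsmall
  have hinv : ∀ x, A⁻¹ *ᵥ (A *ᵥ x) = x := fun x => by
    rw [Matrix.mulVec_mulVec, Matrix.nonsing_inv_mul A hdet, Matrix.one_mulVec]
  have hBv : ∀ x, ‖B *ᵥ x‖ ≤ K * δ * ‖x‖ := fun x =>
    (Matrix.linfty_opNorm_mulVec B x).trans (mul_le_mul_of_nonneg_right hB (norm_nonneg _))
  have hCv : ∀ x, ‖C *ᵥ x‖ ≤ K * ‖x‖ := fun x =>
    (Matrix.linfty_opNorm_mulVec C x).trans (mul_le_mul_of_nonneg_right hC (norm_nonneg _))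
  have hDv : ∀ x, ‖D *ᵥ x - x‖ ≤ K * δ * ‖x‖ := fun x => by
    have h := (Matrix.linfty_opNorm_mulVec (D - 1) x).trans
      (mul_le_mul_of_nonneg_right hD (norm_nonneg _))
    rwa [Matrix.sub_mulVec, Matrix.one_mulVec] at h
  have hs0 : 0 ≤ M * (K * δ * K) := by positivity
  have hst : 4 * (M * (K * δ * K)) + 2 * (K * δ) ≤ 1 := by linarith
  -- key bound
  have key : ∀ v, ‖v‖ ≤ 4 / 3 * M * ‖A₁ *ᵥ v‖ := by
    intro v
    have hAx : A *ᵥ (Sum.elim v (-(C *ᵥ v))) =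
        Sum.elim (A₁ *ᵥ v - B *ᵥ (C *ᵥ v)) (-(D *ᵥ (C *ᵥ v) - C *ᵥ v)) := by
      rw [hAdef, Matrix.fromBlocks_mulVec]
      simp only [Sum.elim_comp_inl, Sum.elim_comp_inr, Matrix.mulVec_neg]
      congr 1 <;> abel
    have hBC : K * δ * ‖C *ᵥ v‖ ≤ K * δ * K * ‖v‖ := by
      rw [mul_assoc (K * δ)]
      exact mul_le_mul_of_nonneg_left (hCv v) ht0
    have h1 : ‖A *ᵥ (Sum.elim v (-(C *ᵥ v)))‖ ≤ ‖A₁ *ᵥ v‖ + K * δ * K * ‖v‖ := by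
      rw [hAx]
      apply aux_elim_norm_le
      · positivity
      · exact (norm_sub_le _ _).trans (by linarith [hBv (C *ᵥ v)])
      · rw [norm_neg]
        linarith [hDv (C *ᵥ v), norm_nonneg (A₁ *ᵥ v)]
    have h2 : ‖v‖ ≤ M * ‖A *ᵥ (Sum.elim v (-(C *ᵥ v)))‖ := by
      refine (aux_left_norm_le v (-(C *ᵥ v))).trans ?_
      have h := Matrix.linfty_opNorm_mulVec A⁻¹ (A *ᵥ (Sum.elim v (-(C *ᵥ v))))
      rwa [hinv, ← hM] at h
    have h3 := mul_le_mul_of_nonneg_left h1 hM0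
    have h4 : M * (K * δ * K) * ‖v‖ ≤ 1 / 4 * ‖v‖ :=
      mul_le_mul_of_nonneg_right (by linarith) (norm_nonneg _)
    linarith
  have hU : IsUnit A₁ := by
    rw [← Matrix.mulVec_injective_iff_isUnit]
    intro x y hxy
    have h := key (x - y)
    have hz : A₁ *ᵥ (x - y) = 0 := by
      rw [Matrix.mulVec_sub]; exact sub_eq_zero.2 hxy
    rw [hz, norm_zero, mul_zero] at h
    exact sub_eq_zero.1 (norm_le_zero_iff.1 h)
  refine ⟨hU, fun b₁ d => ?_⟩
  have hdet1 : IsUnit A₁.det := (Matrix.isUnit_iff_isUnit_det A₁).1 hU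
  have hr1 : ∀ x, A₁ *ᵥ (A₁⁻¹ *ᵥ x) = x := fun x => by
    rw [Matrix.mulVec_mulVec, Matrix.mul_nonsing_inv A₁ hdet1, Matrix.one_mulVec]
  have hl1 : ∀ x, A₁⁻¹ *ᵥ (A₁ *ᵥ x) = x := fun x => by
    rw [Matrix.mulVec_mulVec, Matrix.nonsing_inv_mul A₁ hdet1, Matrix.one_mulVec]
  have hr : ∀ x, A *ᵥ (A⁻¹ *ᵥ x) = x := fun x => by
    rw [Matrix.mulVec_mulVec, Matrix.mul_nonsing_inv A hdet, Matrix.one_mulVec]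
  obtain ⟨α₁, hα₁⟩ : ∃ x, x = A₁⁻¹ *ᵥ b₁ := ⟨_, rfl⟩
  have hb : A₁ *ᵥ α₁ = b₁ := by rw [hα₁, hr1]
  rw [← hα₁]
  obtain ⟨w, hw⟩ : ∃ w, w = d - C *ᵥ α₁ := ⟨_, rfl⟩
  rw [← hw]
  have hwn : ‖w‖ ≤ ‖d‖ + K * ‖α₁‖ := by
    rw [hw]; exact (norm_sub_le _ _).trans (by linarith [hCv α₁])
  obtain ⟨e, he⟩ : ∃ e, e = A⁻¹ *ᵥ (Sum.elim b₁ d) - Sum.elim α₁ w := ⟨_, rfl⟩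
  rw [← he]
  obtain ⟨e₁, e₂, hee⟩ : ∃ e₁ e₂, e = Sum.elim e₁ e₂ :=
    ⟨e ∘ Sum.inl, e ∘ Sum.inr, (Sum.elim_comp_inl_inr e).symm⟩
  have hAe : A *ᵥ e = Sum.elim b₁ d - Sum.elim (b₁ + B *ᵥ w) (C *ᵥ α₁ + D *ᵥ w) := by
    rw [he, Matrix.mulVec_sub, hr, hAdef, Matrix.fromBlocks_mulVec]
    simp only [Sum.elim_comp_inl, Sum.elim_comp_inr, hb]
  rw [hee, hAdef, Matrix.fromBlocks_mulVec] at hAe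
  simp only [Sum.elim_comp_inl, Sum.elim_comp_inr] at hAe
  have E1 : A₁ *ᵥ e₁ + B *ᵥ e₂ = -(B *ᵥ w) := by
    funext i
    have := congrFun hAe (Sum.inl i)
    simp only [Sum.elim_inl, Pi.sub_apply, Pi.add_apply] at this
    simp only [Pi.add_apply, Pi.neg_apply]
    linarith
  have E2 : C *ᵥ e₁ + D *ᵥ e₂ = -(D *ᵥ w - w) := by
    funext i
    have := congrFun hAe (Sum.inr i)
    have h' := congrFun hw i
    simp only [Sum.elim_inr, Pi.sub_apply, Pi.add_apply] at this h'
    simp only [Pi.add_apply, Pi.neg_apply, Pi.sub_apply]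
    linarith
  obtain ⟨a, ha⟩ : ∃ a, a = ‖A₁⁻¹‖ := ⟨_, rfl⟩
  have ha0 : 0 ≤ a := ha ▸ norm_nonneg _
  rw [← ha]
  obtain ⟨r, hrd⟩ : ∃ r, r = K * δ * ‖w‖ := ⟨_, rfl⟩
  have hr0 : 0 ≤ r := by rw [hrd]; positivity
  have b1 : ‖e₁‖ ≤ a * r + 4 / 3 * M * (K * δ * ‖e₂‖) := by
    have h : e₁ = A₁⁻¹ *ᵥ (-(B *ᵥ w)) - A₁⁻¹ *ᵥ (B *ᵥ e₂) := by
      rw [← E1, Matrix.mulVec_add, hl1]; abel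
    have h1 : ‖A₁⁻¹ *ᵥ (-(B *ᵥ w))‖ ≤ a * r := by
      refine (Matrix.linfty_opNorm_mulVec _ _).trans ?_
      rw [← ha, norm_neg, hrd]
      exact mul_le_mul_of_nonneg_left (hBv w) ha0
    have h2 : ‖A₁⁻¹ *ᵥ (B *ᵥ e₂)‖ ≤ 4 / 3 * M * (K * δ * ‖e₂‖) := by
      refine (key _).trans ?_
      rw [hr1]
      exact mul_le_mul_of_nonneg_left (hBv e₂) (by positivity)
    rw [h]
    exact (norm_sub_le _ _).trans (add_le_add h1 h2)
  have b2 : ‖e₂‖ ≤ r + K * ‖e₁‖ + K * δ * ‖e₂‖ := by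
    have h : e₂ = -(D *ᵥ w - w) - C *ᵥ e₁ - (D *ᵥ e₂ - e₂) := by
      rw [← E2]; abel
    have h1 := norm_sub_le (-(D *ᵥ w - w) - C *ᵥ e₁) (D *ᵥ e₂ - e₂)
    have h2 := norm_sub_le (-(D *ᵥ w - w)) (C *ᵥ e₁)
    rw [← h] at h1
    rw [norm_neg] at h2
    linarith [hDv w, hDv e₂, hCv e₁]
  have c2 : ‖e₂‖ ≤ 2 * (1 + K * a) * r := by
    have h1 := mul_le_mul_of_nonneg_left b1 hK0
    have h2 : (4 / 3 * (M * (K * δ * K)) + K * δ) * ‖e₂‖ ≤ 1 / 2 * ‖e₂‖ :=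
      mul_le_mul_of_nonneg_right (by linarith) (norm_nonneg _)
    linarith
  have c1 : ‖e₁‖ ≤ (2 * K * a + 2) * r := by
    have hMt : 0 ≤ M * (K * δ) := by positivity
    have h1 : M * (K * δ) ≤ 1 / 4 := by
      have := mul_le_mul_of_nonneg_left hK hMt
      linarith
    have h2 : M * (K * δ) * ‖e₂‖ ≤ 1 / 4 * ‖e₂‖ :=
      mul_le_mul_of_nonneg_right h1 (norm_nonneg _)
    have h3 : 0 ≤ (K - 1) * (a * r) := mul_nonneg (by linarith) (by positivity)
    have h4 : 0 ≤ a * r := by positivity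
    linarith
  have hfin : ‖e‖ ≤ (2 * K * a + 2) * r := by
    rw [hee]
    exact aux_elim_norm_le _ _ _ (by positivity) c1 (by linarith)
  refine hfin.trans ?_
  have h5 := mul_le_mul_of_nonneg_left hwn
    (show 0 ≤ K * δ * (2 * K * a + 2) by positivity)
  rw [hrd]
  linarith
end
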